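/- arXiv:2412.18002 — 2 statements merged into one kernel-verified Lean document; each statement's English description precedes it below -/
import Mathlib

section
/- Let k ∈ ℕ and let h be an integer with 1 ≤ h ≤ k. Then every k-nice set Q ⊆ ℤ² whose height is exactly h has at most γ_h · k + β_h elements. -/
/-- A set `Q ⊆ ℤ²` is `k`-nice if every element is a nonzero coprime pair,
`Q` does not contain both a pair and its negation, and all cross determinants
are bounded by `k` in absolute value. -/
def IsKNice (k : ℕ) (Q : Set (ℤ × ℤ)) : Prop :=
  (∀ p ∈ Q, p ≠ (0, 0) ∧ Int.gcd p.1 p.2 = 1) ∧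
  (∀ p ∈ Q, -p ∉ Q) ∧
  (∀ p ∈ Q, ∀ q ∈ Q, |p.1 * q.2 - q.1 * p.2| ≤ (k : ℤ))

/-- `Q` is y-non-negative: all second coordinates are non-negative. -/
def YNonneg (Q : Set (ℤ × ℤ)) : Prop := ∀ p ∈ Q, 0 ≤ p.2

/-- The height of `Q` is at most `h`. -/
def HeightLe (Q : Set (ℤ × ℤ)) (h : ℕ) : Prop := ∀ p ∈ Q, |p.2| ≤ (h : ℤ)

/-- The height of `Q` is exactly `h`: the maximum of `|n|` over `(m, n) ∈ Q` is `h`. -/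
def HeightEq (Q : Set (ℤ × ℤ)) (h : ℕ) : Prop :=
  HeightLe Q h ∧ ∃ p ∈ Q, |p.2| = (h : ℤ)

/-- `ρ_ℓ = ∏_{p prime, p ∣ ℓ} (1 - 1/p)`. -/
noncomputable def rho (ℓ : ℕ) : ℝ :=
  ∏ p ∈ ℓ.primeFactors, (1 - 1 / (p : ℝ))

/-- `α_ℓ` is the maximum over `1 ≤ a ≤ b ≤ 2ℓ` of the number of integers in `[a, b]`
coprime with `ℓ` minus `ρ_ℓ (b - a + 1)`. -/
noncomputable def alpha (ℓ : ℕ) : ℝ :=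
  sSup {x : ℝ | ∃ a b : ℤ, 1 ≤ a ∧ a ≤ b ∧ b ≤ 2 * (ℓ : ℤ) ∧
    x = ((Finset.filter (fun z => Int.gcd z (ℓ : ℤ) = 1) (Finset.Icc a b)).card : ℝ)
      - rho ℓ * ((b : ℝ) - (a : ℝ) + 1)}

/-- `γ_ℓ` is the optimal value of the linear program `LP_ℓ`. -/
noncomputable def gamma (ℓ : ℕ) : ℝ :=
  sSup {x : ℝ | ∃ σ τ : ℕ → ℝ,
    (∀ i, 1 ≤ i → i ≤ ℓ → 0 ≤ σ i ∧ σ i ≤ τ i) ∧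
    (∀ i j, 1 ≤ i → i ≤ ℓ → 1 ≤ j → j ≤ ℓ →
      -1 ≤ (i : ℝ) * τ j - (j : ℝ) * σ i ∧ (i : ℝ) * τ j - (j : ℝ) * σ i ≤ 1) ∧
    x = ∑ i ∈ Finset.Icc 1 ℓ, rho i * (τ i - σ i)}

/-- `β_0 = 1` and `β_ℓ = β_{ℓ-1} + α_ℓ + ρ_ℓ`. -/
noncomputable def beta : ℕ → ℝ
  | 0 => 1
  | n + 1 => beta n + alpha (n + 1) + rho (n + 1)

/-! Up to replacing elements of `Q` by their negatives, all second coordinates are non-negative.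
The points of `Q` in row `i ≥ 1` have first coordinates coprime with `i` in some interval
`[s_i, t_i]`, and since the integers coprime with `i` have period `i` and density `ρ_i`, there are
at most `ρ_i (t_i - s_i + 1) + α_i` of them. Row `0` contributes at most one point. It remains to
bound `∑ ρ_i (t_i - s_i)` by `γ_h k`: the determinant conditions make `(s / k, t / k)` a feasible
point of the linear program, once a shear has made it non-negative. A row without points is given
the degenerate interval `s_i = t_i` where it meets the segment from the origin to a point of `Q`
of height `h`; the determinant conditions survive since they persist under scaling a point by a
factor in `[0, 1]`. -/

section CoprimeCount

open Finset

lemma rho_nonneg (ℓ : ℕ) : 0 ≤ rho ℓ :=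
  prod_nonneg fun p _ => by simpa using Nat.cast_inv_le_one p

lemma totient_eq_mul_rho (ℓ : ℕ) : (Nat.totient ℓ : ℝ) = ℓ * rho ℓ := by
  have h := congrArg (Rat.cast : ℚ → ℝ) (Nat.totient_eq_mul_prod_factors ℓ)
  push_cast at h
  simpa only [rho, one_div] using h

/-- The number of integers in `[a, b]` coprime with `ℓ`, the counting function in `alpha`. -/
noncomputable def coprimeCount (ℓ : ℕ) (a b : ℤ) : ℕ :=
  #{z ∈ Icc a b | Int.gcd z ℓ = 1}

lemma coprimeCount_add_mul_add_mul (ℓ : ℕ) (a b t : ℤ) :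
    coprimeCount ℓ (a + t * ℓ) (b + t * ℓ) = coprimeCount ℓ a b := by
  rw [coprimeCount, ← map_add_right_Icc, filter_map, card_map]
  simp [coprimeCount]

lemma coprimeCount_natCast_add_sub_one (ℓ n : ℕ) :
    coprimeCount ℓ n (n + ℓ - 1) = Nat.totient ℓ := by
  rw [← Nat.filter_coprime_Ico_eq_totient ℓ n, coprimeCount,
    ← card_map (Nat.castEmbedding (R := ℤ))]
  congr 1
  ext z
  simp only [mem_filter, mem_Icc, mem_map, mem_Ico, Nat.castEmbedding_apply]
  constructor
  · rintro ⟨hz, hcop⟩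
    lift z to ℕ using by lia
    exact ⟨z, ⟨by lia, Nat.coprime_comm.1 (by simpa using hcop)⟩, rfl⟩
  · rintro ⟨m, ⟨hm, hcop⟩, rfl⟩
    exact ⟨by lia, by simpa using hcop.symm⟩

lemma coprimeCount_add_sub_one (ℓ : ℕ) (a : ℤ) :
    coprimeCount ℓ a (a + ℓ - 1) = Nat.totient ℓ := by
  obtain rfl | hℓ := ℓ.eq_zero_or_pos
  · simp [coprimeCount]
  have hnonneg : 0 ≤ a + |a| * ℓ := by nlinarith [neg_abs_le a, abs_nonneg a]
  obtain ⟨n, hn⟩ := Int.eq_ofNat_of_zero_le hnonneg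
  rw [← coprimeCount_add_mul_add_mul ℓ a _ |a|, ← coprimeCount_natCast_add_sub_one ℓ n, ← hn]
  congr 1
  ring

lemma coprimeCount_add_coprimeCount (ℓ : ℕ) {a b c : ℤ} (hab : a ≤ b + 1) (hbc : b ≤ c) :
    coprimeCount ℓ a b + coprimeCount ℓ (b + 1) c = coprimeCount ℓ a c := by
  have hdisj : Disjoint (Icc a b) (Icc (b + 1) c) :=
    disjoint_left.2 fun z => by simp only [mem_Icc]; lia
  have hunion : Icc a b ∪ Icc (b + 1) c = Icc a c := by
    ext z
    simp only [mem_union, mem_Icc]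
    lia
  rw [coprimeCount, coprimeCount, coprimeCount, ← hunion, filter_union,
    card_union_of_disjoint (disjoint_filter_filter hdisj)]

lemma coprimeCount_add_mul (ℓ : ℕ) {a b : ℤ} (hab : a ≤ b + 1) (n : ℕ) :
    coprimeCount ℓ a (b + n * ℓ) = coprimeCount ℓ a b + n * Nat.totient ℓ := by
  induction n with
  | zero => simp
  | succ n ih =>
    have hend : b + (n + 1 : ℕ) * ℓ = (b + n * ℓ + 1) + ℓ - 1 := by push_cast; ring
    rw [← coprimeCount_add_coprimeCount ℓ (b := b + n * ℓ) (by lia) (by push_cast; lia), ih, hend,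
      coprimeCount_add_sub_one]
    ring

lemma coprimeCount_le_of_le_two_mul {ℓ : ℕ} {a b : ℤ} (ha : 1 ≤ a) (hab : a ≤ b)
    (hb : b ≤ 2 * ℓ) : (coprimeCount ℓ a b : ℝ) ≤ rho ℓ * (b - a + 1) + alpha ℓ := by
  rw [← sub_le_iff_le_add']
  refine le_csSup ⟨2 * ℓ, ?_⟩ ⟨a, b, ha, hab, hb, rfl⟩
  rintro x ⟨a, b, ha, hab, hb, rfl⟩
  have hcard : #{z ∈ Icc a b | Int.gcd z ℓ = 1} ≤ 2 * ℓ :=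
    (card_filter_le _ _).trans (by rw [Int.card_Icc]; lia)
  have hlen : (0 : ℝ) ≤ b - a + 1 := by exact_mod_cast (by lia : 0 ≤ b - a + 1)
  calc _ ≤ (#{z ∈ Icc a b | Int.gcd z ℓ = 1} : ℝ) :=
        sub_le_self _ (mul_nonneg (rho_nonneg ℓ) hlen)
    _ ≤ 2 * ℓ := by exact_mod_cast hcard

lemma coprimeCount_le {ℓ : ℕ} (hℓ : 1 ≤ ℓ) {a b : ℤ} (hab : a ≤ b) :
    (coprimeCount ℓ a b : ℝ) ≤ rho ℓ * (b - a + 1) + alpha ℓ := by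
  obtain ⟨t, a₀, ha₀, ha₀ℓ, rfl⟩ : ∃ t a₀ : ℤ, 1 ≤ a₀ ∧ a₀ ≤ ℓ ∧ a = a₀ + t * ℓ :=
    ⟨(a - 1) / ℓ, (a - 1) % ℓ + 1, by linarith [Int.emod_nonneg (a - 1) (b := ℓ) (by lia)],
      by linarith [Int.emod_lt_of_pos (a - 1) (b := ℓ) (by lia)],
      by linarith [Int.emod_add_ediv_mul (a - 1) ℓ]⟩
  obtain ⟨n, r, hr, hb⟩ : ∃ n r : ℕ, r < ℓ ∧ b = a₀ + r + n * ℓ + t * ℓ := by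
    obtain ⟨m, rfl⟩ := Int.le.dest hab
    refine ⟨m / ℓ, m % ℓ, Nat.mod_lt m hℓ, ?_⟩
    have hm : ((m % ℓ : ℕ) + (m / ℓ : ℕ) * ℓ : ℤ) = m := by exact_mod_cast Nat.mod_add_div' m ℓ
    linarith
  have hsmall := coprimeCount_le_of_le_two_mul (ℓ := ℓ) (b := a₀ + r) ha₀ (by lia) (by lia)
  rw [hb, coprimeCount_add_mul_add_mul, coprimeCount_add_mul ℓ (by lia)]
  push_cast [totient_eq_mul_rho] at hsmall ⊢
  linarith

lemma alpha_nonneg {ℓ : ℕ} (hℓ : 1 ≤ ℓ) : 0 ≤ alpha ℓ := by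
  have hle := coprimeCount_le (ℓ := ℓ) hℓ (a := 1) (b := ℓ) (by lia)
  have hcount : coprimeCount ℓ 1 ℓ = Nat.totient ℓ := by simpa using coprimeCount_add_sub_one ℓ 1
  rw [hcount, totient_eq_mul_rho] at hle
  push_cast at hle
  linarith

lemma beta_eq_one_add_sum (h : ℕ) : beta h = 1 + ∑ i ∈ Icc 1 h, (alpha i + rho i) := by
  induction h with
  | zero => simp [beta]
  | succ n ih => rw [beta, ih, sum_Icc_succ_top (by lia)]; ring

end CoprimeCount

section LinearProgram

open Finset

variable {ℓ : ℕ} {σ τ : ℕ → ℝ}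

lemma sub_le_of_natCast_mul_sub_le {i : ℕ} {s t K : ℝ} (hi : 1 ≤ i) (hK : 0 ≤ K)
    (h : i * t - i * s ≤ K) : t - s ≤ K := by
  have hi' : (1 : ℝ) ≤ i := by exact_mod_cast hi
  nlinarith

lemma sum_rho_mul_sub_le_gamma (hσ : ∀ i ∈ Icc 1 ℓ, 0 ≤ σ i) (hστ : ∀ i ∈ Icc 1 ℓ, σ i ≤ τ i)
    (hdet : ∀ i ∈ Icc 1 ℓ, ∀ j ∈ Icc 1 ℓ, |i * τ j - j * σ i| ≤ 1) :
    ∑ i ∈ Icc 1 ℓ, rho i * (τ i - σ i) ≤ gamma ℓ := by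
  simp only [mem_Icc, and_imp] at hσ hστ hdet
  refine le_csSup ⟨∑ i ∈ Icc 1 ℓ, rho i, ?_⟩
    ⟨σ, τ, fun i hi hi' => ⟨hσ i hi hi', hστ i hi hi'⟩,
      fun i j hi hi' hj hj' => abs_le.1 (hdet i hi hi' j hj hj'), rfl⟩
  rintro x ⟨σ', τ', -, hdet', rfl⟩
  refine sum_le_sum fun i hi => mul_le_of_le_one_right (rho_nonneg i) ?_
  obtain ⟨hi, hi'⟩ := mem_Icc.1 hi
  exact sub_le_of_natCast_mul_sub_le hi zero_le_one (hdet' i i hi hi' hi hi').2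

/-- Both the objective and the determinants are invariant under the shear `x ↦ x + C * i` of
row `i`, which for large `C` makes all `σ i` non-negative. -/
lemma sum_rho_mul_sub_le_gamma_of_le (hστ : ∀ i ∈ Icc 1 ℓ, σ i ≤ τ i)
    (hdet : ∀ i ∈ Icc 1 ℓ, ∀ j ∈ Icc 1 ℓ, |i * τ j - j * σ i| ≤ 1) :
    ∑ i ∈ Icc 1 ℓ, rho i * (τ i - σ i) ≤ gamma ℓ := by
  set C : ℝ := ∑ i ∈ Icc 1 ℓ, |σ i|
  have hshear : ∀ i ∈ Icc 1 ℓ, 0 ≤ σ i + C * i := fun i hi => by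
    have hC : |σ i| ≤ C := single_le_sum (f := fun i => |σ i|) (fun _ _ => abs_nonneg _) hi
    have hi' : (1 : ℝ) ≤ i := by exact_mod_cast (mem_Icc.1 hi).1
    nlinarith [neg_abs_le (σ i), abs_nonneg (σ i)]
  calc ∑ i ∈ Icc 1 ℓ, rho i * (τ i - σ i)
      = ∑ i ∈ Icc 1 ℓ, rho i * ((τ i + C * i) - (σ i + C * i)) := by simp
    _ ≤ gamma ℓ := sum_rho_mul_sub_le_gamma hshear (by simpa using hστ) fun i hi j hj => by
      convert hdet i hi j hj using 2
      ring

lemma sum_rho_mul_sub_le_gamma_mul {K : ℝ} (hK : 0 ≤ K) (hστ : ∀ i ∈ Icc 1 ℓ, σ i ≤ τ i)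
    (hdet : ∀ i ∈ Icc 1 ℓ, ∀ j ∈ Icc 1 ℓ, |i * τ j - j * σ i| ≤ K) :
    ∑ i ∈ Icc 1 ℓ, rho i * (τ i - σ i) ≤ gamma ℓ * K := by
  obtain rfl | hK := hK.eq_or_lt
  · rw [mul_zero]
    exact sum_nonpos fun i hi => mul_nonpos_of_nonneg_of_nonpos (rho_nonneg i) <|
      sub_le_of_natCast_mul_sub_le (mem_Icc.1 hi).1 le_rfl (le_of_abs_le (hdet i hi i hi))
  · rw [← div_le_iff₀ hK, sum_div]
    simp only [mul_div_assoc, sub_div]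
    refine sum_rho_mul_sub_le_gamma_of_le (fun i hi => by gcongr; exact hστ i hi)
      fun i hi j hj => ?_
    rw [← mul_div_assoc, ← mul_div_assoc, ← sub_div, abs_div, abs_of_pos hK, div_le_one hK]
    exact hdet i hi j hj

end LinearProgram

section StarHull

/-- The union of the segments in `ℝ²` from the origin to the points of `Q`. Unlike `Q` itself, it
meets every row between `0` and the largest second coordinate of `Q`. -/
def starHull (Q : Set (ℤ × ℤ)) : Set (ℝ × ℝ) :=
  {v | ∃ p ∈ Q, ∃ c : ℝ, 0 ≤ c ∧ c ≤ 1 ∧ v = (c * p.1, c * p.2)}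

variable {Q : Set (ℤ × ℤ)}

lemma mem_starHull {p : ℤ × ℤ} (hp : p ∈ Q) : ((p.1 : ℝ), (p.2 : ℝ)) ∈ starHull Q :=
  ⟨p, hp, 1, zero_le_one, le_rfl, by simp⟩

lemma exists_mem_starHull {p : ℤ × ℤ} (hp : p ∈ Q) {y : ℝ} (hy : 0 ≤ y) (hyp : y ≤ p.2) :
    ∃ x : ℝ, (x, y) ∈ starHull Q := by
  obtain hp₀ | hp₀ := (hy.trans hyp).eq_or_lt
  · exact ⟨0, p, hp, 0, le_rfl, zero_le_one, by simp [le_antisymm (hp₀ ▸ hyp) hy]⟩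
  · exact ⟨y / p.2 * p.1, p, hp, y / p.2, div_nonneg hy hp₀.le, (div_le_one hp₀).2 hyp,
      by rw [div_mul_cancel₀ _ hp₀.ne']⟩

lemma abs_det_le_of_mem_starHull {K : ℤ}
    (hdet : ∀ p ∈ Q, ∀ q ∈ Q, |p.1 * q.2 - q.1 * p.2| ≤ K) {u v : ℝ × ℝ}
    (hu : u ∈ starHull Q) (hv : v ∈ starHull Q) : |u.1 * v.2 - v.1 * u.2| ≤ K := by
  obtain ⟨p, hp, c, hc, hc1, rfl⟩ := hu
  obtain ⟨q, hq, d, hd, hd1, rfl⟩ := hv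
  have hpq : |(p.1 * q.2 - q.1 * p.2 : ℝ)| ≤ K := by exact_mod_cast hdet p hp q hq
  calc |c * p.1 * (d * q.2) - d * q.1 * (c * p.2)|
      = |c * d * (p.1 * q.2 - q.1 * p.2)| := by ring_nf
    _ = c * d * |(p.1 * q.2 - q.1 * p.2 : ℝ)| := by
      rw [abs_mul, abs_of_nonneg (mul_nonneg hc hd)]
    _ ≤ |(p.1 * q.2 - q.1 * p.2 : ℝ)| :=
        mul_le_of_le_one_left (abs_nonneg _) (mul_le_one₀ hc1 hd hd1)
    _ ≤ K := hpq

end StarHull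

lemma eq_or_eq_neg_of_mul_eq_mul {p q : ℤ × ℤ} (hp : IsCoprime p.1 p.2) (hq : IsCoprime q.1 q.2)
    (h : p.1 * q.2 = q.1 * p.2) : p = q ∨ p = -q := by
  obtain ⟨a, b, hab⟩ := hp
  obtain ⟨c, d, hcd⟩ := hq
  obtain ⟨t, ht⟩ : ∃ t, p = t • q := by
    refine ⟨c * p.1 + d * p.2, Prod.ext ?_ ?_⟩ <;>
      simp only [Prod.smul_fst, Prod.smul_snd, smul_eq_mul]
    · linear_combination -p.1 * hcd + d * h
    · linear_combination -p.2 * hcd - c * h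
  have hunit : IsUnit t := .of_mul_eq_one (a * q.1 + b * q.2) <| by
    rw [ht] at hab
    simp only [Prod.smul_fst, Prod.smul_snd, smul_eq_mul] at hab
    linear_combination hab
  obtain rfl | rfl := Int.isUnit_iff.1 hunit
  · exact .inl (by simpa using ht)
  · exact .inr (by simpa using ht)

lemma eq_or_eq_neg_of_map_eq_or_eq_neg {α : Type*} [InvolutiveNeg α] {f : α → α}
    (hf : ∀ a, f a = a ∨ f a = -a) {a b : α} (h : f a = f b ∨ f a = -f b) :
    a = b ∨ a = -b := by
  obtain ha | ha := hf a <;> obtain hb | hb := hf b <;> rw [ha, hb] at h <;>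
    simpa [neg_eq_iff_eq_neg, or_comm] using h

namespace IsKNice

open Set

variable {k h : ℕ} {Q : Set (ℤ × ℤ)}

lemma isCoprime (hQ : IsKNice k Q) {p : ℤ × ℤ} (hp : p ∈ Q) : IsCoprime p.1 p.2 :=
  Int.isCoprime_iff_gcd_eq_one.2 (hQ.1 p hp).2

lemma eq_of_eq_or_eq_neg (hQ : IsKNice k Q) {p q : ℤ × ℤ} (hp : p ∈ Q) (hq : q ∈ Q)
    (h : p = q ∨ p = -q) : p = q :=
  h.resolve_right fun h => hQ.2.1 q hq (h ▸ hp)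

lemma eq_of_mul_eq_mul (hQ : IsKNice k Q) {p q : ℤ × ℤ} (hp : p ∈ Q) (hq : q ∈ Q)
    (h : p.1 * q.2 = q.1 * p.2) : p = q :=
  hQ.eq_of_eq_or_eq_neg hp hq (eq_or_eq_neg_of_mul_eq_mul (hQ.isCoprime hp) (hQ.isCoprime hq) h)

/-- If `p, q ∈ Q` are not parallel, then `r ∈ Q` is determined by its determinants with `p`
and `q`. -/
lemma finite (hQ : IsKNice k Q) : Q.Finite := by
  by_cases hpar : ∀ p ∈ Q, ∀ q ∈ Q, p.1 * q.2 = q.1 * p.2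
  · exact Set.Subsingleton.finite fun p hp q hq => hQ.eq_of_mul_eq_mul hp hq (hpar p hp q hq)
  push Not at hpar
  obtain ⟨p, hp, q, hq, hpq⟩ := hpar
  have hmaps : MapsTo (fun r : ℤ × ℤ => (p.1 * r.2 - r.1 * p.2, q.1 * r.2 - r.1 * q.2)) Q
      (Icc (-k : ℤ) k ×ˢ Icc (-k : ℤ) k) := fun r hr =>
    ⟨abs_le.1 (hQ.2.2 p hp r hr), abs_le.1 (hQ.2.2 q hq r hr)⟩
  refine .of_injOn hmaps (fun r _ r' _ hr => ?_) ((finite_Icc _ _).prod (finite_Icc _ _))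
  obtain ⟨hpr, hqr⟩ := Prod.mk.inj hr
  refine Prod.ext (mul_left_cancel₀ (sub_ne_zero.2 hpq) ?_)
    (mul_left_cancel₀ (sub_ne_zero.2 hpq) ?_)
  · linear_combination q.1 * hpr - p.1 * hqr
  · linear_combination q.2 * hpr - p.2 * hqr

section Signs

variable {f : ℤ × ℤ → ℤ × ℤ}

lemma injOn_of_eq_or_eq_neg (hQ : IsKNice k Q) (hf : ∀ p, f p = p ∨ f p = -p) : InjOn f Q :=
  fun _ hp _ hq hpq => hQ.eq_of_eq_or_eq_neg hp hq <|
    eq_or_eq_neg_of_map_eq_or_eq_neg hf (.inl hpq)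

lemma image_of_eq_or_eq_neg (hQ : IsKNice k Q) (hf : ∀ p, f p = p ∨ f p = -p) :
    IsKNice k (f '' Q) := by
  refine ⟨forall_mem_image.2 fun p hp => ?_, forall_mem_image.2 fun p hp => ?_,
    forall_mem_image.2 fun p hp => forall_mem_image.2 fun q hq => ?_⟩
  · obtain h | h := hf p <;> rw [h]
    · exact hQ.1 p hp
    · simpa [Prod.ext_iff] using hQ.1 p hp
  · rintro ⟨q, hq, hqp⟩
    obtain rfl : p = q := hQ.eq_of_eq_or_eq_neg hp hq <|
      eq_or_eq_neg_of_map_eq_or_eq_neg hf (.inr (neg_eq_iff_eq_neg.1 hqp.symm))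
    have hp₀ : p ≠ 0 := (hQ.1 p hp).1
    have hfp₀ : f p ≠ 0 := by obtain h | h := hf p <;> simpa [h] using hp₀
    exact hfp₀ (self_eq_neg.1 hqp)
  · have habs : |(f p).1 * (f q).2 - (f q).1 * (f p).2| = |p.1 * q.2 - q.1 * p.2| := by
      rw [abs_eq_abs]
      obtain h | h := hf p <;> obtain h' | h' := hf q <;> simp [h, h', neg_add_eq_sub]
    exact habs.trans_le (hQ.2.2 p hp q hq)

end Signs

lemma exists_yNonneg (hQ : IsKNice k Q) (hh : HeightEq Q h) :
    ∃ Q', IsKNice k Q' ∧ YNonneg Q' ∧ HeightEq Q' h ∧ Q'.ncard = Q.ncard := by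
  let f : ℤ × ℤ → ℤ × ℤ := fun p => if p.2 < 0 then -p else p
  have hf : ∀ p, f p = p ∨ f p = -p := fun p => by grind
  have hf₂ : ∀ p, (f p).2 = |p.2| := fun p => by
    by_cases hp : p.2 < 0
    · simp [f, hp, abs_of_neg]
    · simp [f, hp, abs_of_nonneg (not_lt.1 hp)]
  obtain ⟨hle, p, hp, hph⟩ := hh
  refine ⟨f '' Q, hQ.image_of_eq_or_eq_neg hf, ?_, ⟨?_, f p, mem_image_of_mem f hp, ?_⟩,
    (hQ.injOn_of_eq_or_eq_neg hf).ncard_image⟩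
  · exact forall_mem_image.2 fun q _ => by simp [hf₂]
  · exact forall_mem_image.2 fun q hq => by simpa [hf₂] using hle q hq
  · simpa [hf₂] using hph

end IsKNice

section Rows

open Finset

variable {k h : ℕ} {Q : Finset (ℤ × ℤ)}

/-- The points of `Q` with second coordinate `i`. -/
def row (Q : Finset (ℤ × ℤ)) (i : ℕ) : Finset (ℤ × ℤ) := {p ∈ Q | p.2 = i}

lemma mem_row {i : ℕ} {p : ℤ × ℤ} : p ∈ row Q i ↔ p ∈ Q ∧ p.2 = i := mem_filter

lemma card_eq_card_row_zero_add_sum (hy : YNonneg (Q : Set (ℤ × ℤ)))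
    (hh : HeightLe (Q : Set (ℤ × ℤ)) h) : #Q = #(row Q 0) + ∑ i ∈ Icc 1 h, #(row Q i) := by
  have hrow : ∀ i, #(row Q i) = #{p ∈ Q | p.2.toNat = i} := fun i =>
    congrArg card <| filter_congr fun p hp => by have := hy p hp; lia
  have hmaps : Set.MapsTo (fun p : ℤ × ℤ => p.2.toNat) Q (Icc 0 h : Finset ℕ) := fun p hp => by
    have := (abs_le.1 (hh p hp)).2
    simp only [coe_Icc, Set.mem_Icc]
    lia
  rw [card_eq_sum_card_fiberwise hmaps, ← insert_Icc_add_one_left_eq_Icc h.zero_le,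
    sum_insert (by simp)]
  simp only [hrow, zero_add]

lemma card_row_zero_le_one (hQ : IsKNice k (Q : Set (ℤ × ℤ))) : #(row Q 0) ≤ 1 :=
  card_le_one.2 fun p hp q hq => by
    obtain ⟨hp, hp₀⟩ := mem_row.1 hp
    obtain ⟨hq, hq₀⟩ := mem_row.1 hq
    exact hQ.eq_of_mul_eq_mul hp hq (by simp [hp₀, hq₀])

lemma card_row_le_coprimeCount (hQ : ∀ p ∈ Q, IsCoprime p.1 p.2) {i : ℕ} {a b : ℤ}
    (hab : ∀ p ∈ row Q i, p.1 ∈ Icc a b) : #(row Q i) ≤ coprimeCount i a b := by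
  refine card_le_card_of_injOn Prod.fst (fun p hp => ?_) fun p hp q hq hpq => ?_
  · refine mem_filter.2 ⟨hab p hp, ?_⟩
    obtain ⟨hp, hpi⟩ := mem_row.1 hp
    exact hpi ▸ Int.isCoprime_iff_gcd_eq_one.1 (hQ p hp)
  · exact Prod.ext hpq ((mem_row.1 hp).2.trans (mem_row.1 hq).2.symm)

lemma exists_card_row_le_of_nonempty (hQ : ∀ p ∈ Q, IsCoprime p.1 p.2) {i : ℕ} (hi : 1 ≤ i)
    (hne : (row Q i).Nonempty) :
    ∃ p ∈ row Q i, ∃ q ∈ row Q i, p.1 ≤ q.1 ∧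
      (#(row Q i) : ℝ) ≤ rho i * (q.1 - p.1 + 1) + alpha i := by
  obtain ⟨p, hp, hmin⟩ := exists_min_image _ Prod.fst hne
  obtain ⟨q, hq, hmax⟩ := exists_max_image _ Prod.fst hne
  have hcard := card_row_le_coprimeCount hQ fun r hr => mem_Icc.2 ⟨hmin r hr, hmax r hr⟩
  exact ⟨p, hp, q, hq, hmin q hq,
    (Nat.cast_le.2 hcard).trans (coprimeCount_le hi (hmin q hq))⟩

lemma exists_starHull_card_row_le (hQ : ∀ p ∈ Q, IsCoprime p.1 p.2) {i : ℕ} (hi : 1 ≤ i)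
    (htop : ∃ p ∈ Q, (i : ℤ) ≤ p.2) :
    ∃ s t : ℝ, s ≤ t ∧ (s, (i : ℝ)) ∈ starHull Q ∧ (t, (i : ℝ)) ∈ starHull Q ∧
      (#(row Q i) : ℝ) ≤ rho i * (t - s) + (alpha i + rho i) := by
  obtain hempty | hne := (row Q i).eq_empty_or_nonempty
  · obtain ⟨p, hp, hip⟩ := htop
    obtain ⟨x, hx⟩ := exists_mem_starHull (mem_coe.2 hp) (y := i) (by positivity)
      (by exact_mod_cast hip)
    refine ⟨x, x, le_rfl, hx, hx, ?_⟩
    simpa [hempty] using add_nonneg (alpha_nonneg hi) (rho_nonneg i)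
  · obtain ⟨p, hp, q, hq, hpq, hcard⟩ := exists_card_row_le_of_nonempty hQ hi hne
    have hmem : ∀ r ∈ row Q i, ((r.1 : ℝ), (i : ℝ)) ∈ starHull Q := fun r hr => by
      obtain ⟨hr, hri⟩ := mem_row.1 hr
      simpa [hri] using mem_starHull (mem_coe.2 hr)
    exact ⟨p.1, q.1, by exact_mod_cast hpq, hmem p hp, hmem q hq, by linarith⟩

lemma IsKNice.sum_card_row_le (hQ : IsKNice k (Q : Set (ℤ × ℤ))) (htop : ∃ p ∈ Q, (h : ℤ) ≤ p.2) :
    (∑ i ∈ Icc 1 h, #(row Q i) : ℝ) ≤ gamma h * k + ∑ i ∈ Icc 1 h, (alpha i + rho i) := by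
  obtain ⟨p, hp, hph⟩ := htop
  choose! s t hst hs ht hcard using fun i (hi : i ∈ Icc 1 h) =>
    exists_starHull_card_row_le (fun p hp => hQ.isCoprime hp) (mem_Icc.1 hi).1
      ⟨p, hp, (Nat.cast_le.2 (mem_Icc.1 hi).2).trans hph⟩
  have hLP : ∑ i ∈ Icc 1 h, rho i * (t i - s i) ≤ gamma h * k :=
    sum_rho_mul_sub_le_gamma_mul k.cast_nonneg hst fun i hi j hj => by
      simpa [mul_comm] using abs_det_le_of_mem_starHull hQ.2.2 (ht j hj) (hs i hi)
  calc (∑ i ∈ Icc 1 h, #(row Q i) : ℝ)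
      ≤ ∑ i ∈ Icc 1 h, (rho i * (t i - s i) + (alpha i + rho i)) := sum_le_sum hcard
    _ ≤ gamma h * k + ∑ i ∈ Icc 1 h, (alpha i + rho i) := by
      rw [sum_add_distrib]
      gcongr

theorem IsKNice.card_le_of_yNonneg (hQ : IsKNice k (Q : Set (ℤ × ℤ)))
    (hy : YNonneg (Q : Set (ℤ × ℤ))) (hh : HeightEq (Q : Set (ℤ × ℤ)) h) :
    (#Q : ℝ) ≤ gamma h * k + beta h := by
  obtain ⟨hle, p, hp, hph⟩ := hh
  have hzero : (#(row Q 0) : ℝ) ≤ 1 := by exact_mod_cast card_row_zero_le_one hQ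
  have hpos := hQ.sum_card_row_le (h := h) ⟨p, hp, (abs_of_nonneg (hy p hp) ▸ hph).ge⟩
  rw [card_eq_card_row_zero_add_sum hy hle, beta_eq_one_add_sum]
  push_cast
  linarith

end Rows

theorem kNice_height_card_le_gamma_mul_add_beta_general (k h : ℕ) (Q : Set (ℤ × ℤ))
    (hQ : IsKNice k Q) (hht : HeightEq Q h) :
    Q.Finite ∧ (Q.ncard : ℝ) ≤ gamma h * k + beta h := by
  refine ⟨hQ.finite, ?_⟩
  obtain ⟨Q', hQ', hy, hh, hcard⟩ := hQ.exists_yNonneg hht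
  lift Q' to Finset (ℤ × ℤ) using hQ'.finite
  rw [← hcard, Set.ncard_coe_finset]
  exact hQ'.card_le_of_yNonneg hy hh

theorem kNice_height_card_le_gamma_mul_add_beta (k h : ℕ) (hh1 : 1 ≤ h)
    (hhk : h ≤ k) (Q : Set (ℤ × ℤ)) (hQ : IsKNice k Q) (hht : HeightEq Q h) :
    Q.Finite ∧ (Q.ncard : ℝ) ≤ gamma h * k + beta h :=
  kNice_height_card_le_gamma_mul_add_beta_general k h Q hQ hht
end

section
/- Let k be an integer with 2 ≤ k ≤ 3224. For every k-nice set Q ⊆ ℤ², there exists a k-nice set equivalent to Q whose height is at most √(4k/3). -/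
/-- Application of an integer `2 × 2` matrix to a pair of integers. -/
def matApply (A : Matrix (Fin 2) (Fin 2) ℤ) (p : ℤ × ℤ) : ℤ × ℤ :=
  (A 0 0 * p.1 + A 0 1 * p.2, A 1 0 * p.1 + A 1 1 * p.2)

/-- `Q` and `Q'` are equivalent if `Q'` is obtained from `A • Q`, for some unimodular
integer matrix `A`, by negating a subset of its elements. -/
def EquivSets (Q Q' : Set (ℤ × ℤ)) : Prop :=
  ∃ A : Matrix (Fin 2) (Fin 2) ℤ, |A.det| = 1 ∧
    ∃ f : ℤ × ℤ → ℤ × ℤ, (∀ x, f x = x ∨ f x = -x) ∧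
      Q' = f '' (matApply A '' Q)

variable {A : Matrix (Fin 2) (Fin 2) ℤ} {S : Set (ℤ × ℤ)} {M h : ℕ} {k : ℤ}

/-- The determinant of the `2 × 2` matrix with columns `p` and `q`, the quantity bounded in
`IsKNice`. -/
def crossDet (p q : ℤ × ℤ) : ℤ := p.1 * q.2 - q.1 * p.2

theorem crossDet_neg_left (p q : ℤ × ℤ) : crossDet (-p) q = -crossDet p q := by
  simp only [crossDet, Prod.fst_neg, Prod.snd_neg]
  ring

theorem crossDet_neg_right (p q : ℤ × ℤ) : crossDet p (-q) = -crossDet p q := by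
  simp only [crossDet, Prod.fst_neg, Prod.snd_neg]
  ring

theorem crossDet_matApply (A : Matrix (Fin 2) (Fin 2) ℤ) (p q : ℤ × ℤ) :
    crossDet (matApply A p) (matApply A q) = A.det * crossDet p q := by
  simp only [crossDet, matApply, Matrix.det_fin_two]
  ring

theorem crossDet_smul_eq_add (p q r : ℤ × ℤ) :
    crossDet p q • r = crossDet r q • p + crossDet p r • q := by
  ext <;> simp only [crossDet, Prod.smul_fst, Prod.smul_snd, Prod.fst_add, Prod.snd_add,
    smul_eq_mul] <;> ring

theorem isCoprime_iff_exists_crossDet_eq_one (p : ℤ × ℤ) :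
    IsCoprime p.1 p.2 ↔ ∃ q, crossDet p q = 1 := by
  constructor
  · rintro ⟨s, t, hst⟩
    exact ⟨(-t, s), by simp only [crossDet]; linarith⟩
  · rintro ⟨q, hq⟩
    exact ⟨q.2, -q.1, by simp only [crossDet] at hq; linarith⟩

theorem matApply_one (p : ℤ × ℤ) : matApply 1 p = p := by
  simp [matApply]

theorem matApply_mul (A B : Matrix (Fin 2) (Fin 2) ℤ) (p : ℤ × ℤ) :
    matApply (A * B) p = matApply A (matApply B p) := by
  ext <;> simp only [matApply, Matrix.mul_apply, Fin.sum_univ_two] <;> ring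

theorem matApply_neg (A : Matrix (Fin 2) (Fin 2) ℤ) (p : ℤ × ℤ) :
    matApply A (-p) = -matApply A p := by
  ext <;> simp only [matApply, Prod.fst_neg, Prod.snd_neg] <;> ring

theorem matApply_injective (hA : A.det ≠ 0) : Function.Injective (matApply A) := by
  intro p q hpq
  have key (r : ℤ × ℤ) : crossDet p r = crossDet q r := by
    refine mul_left_cancel₀ hA ?_
    rw [← crossDet_matApply, ← crossDet_matApply, hpq]
  ext
  · simpa [crossDet] using key (0, 1)
  · simpa [crossDet] using key (1, 0)

theorem det_ne_zero_of_abs_det_eq_one (hA : |A.det| = 1) : A.det ≠ 0 := by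
  intro h0
  simp [h0] at hA

theorem isCoprime_matApply (hA : |A.det| = 1) {p : ℤ × ℤ} (hp : IsCoprime p.1 p.2) :
    IsCoprime (matApply A p).1 (matApply A p).2 := by
  rw [isCoprime_iff_exists_crossDet_eq_one] at hp ⊢
  obtain ⟨q, hq⟩ := hp
  obtain hdet | hdet := (abs_eq zero_le_one).1 hA
  · exact ⟨matApply A q, by rw [crossDet_matApply, hdet, hq, one_mul]⟩
  · exact ⟨-matApply A q, by rw [crossDet_neg_right, crossDet_matApply, hdet, hq, mul_one, neg_neg]⟩

/-- All determinants of pairs of elements of `S` are at most `k` in absolute value: the third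
condition of `IsKNice`, with an integer bound. -/
def CrossBounded (k : ℤ) (S : Set (ℤ × ℤ)) : Prop :=
  ∀ p ∈ S, ∀ q ∈ S, |crossDet p q| ≤ k

theorem CrossBounded.nonneg (hS : CrossBounded k S) (hne : S.Nonempty) : 0 ≤ k := by
  obtain ⟨p, hp⟩ := hne
  exact (abs_nonneg _).trans (hS p hp p hp)

theorem CrossBounded.matApply_image (hS : CrossBounded k S) (hA : |A.det| = 1) :
    CrossBounded k (matApply A '' S) := by
  rintro _ ⟨p, hp, rfl⟩ _ ⟨q, hq, rfl⟩
  rw [crossDet_matApply, abs_mul, hA, one_mul]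
  exact hS p hp q hq

theorem IsKNice.crossBounded {k : ℕ} {Q : Set (ℤ × ℤ)} (hQ : IsKNice k Q) : CrossBounded k Q :=
  hQ.2.2

theorem IsKNice.matApply_image {k : ℕ} {Q : Set (ℤ × ℤ)} (hQ : IsKNice k Q)
    (hA : |A.det| = 1) : IsKNice k (matApply A '' Q) := by
  have gcd_eq_one : ∀ p ∈ matApply A '' Q, Int.gcd p.1 p.2 = 1 := by
    rintro _ ⟨p, hp, rfl⟩
    rw [← Int.isCoprime_iff_gcd_eq_one]
    exact isCoprime_matApply hA (Int.isCoprime_iff_gcd_eq_one.2 (hQ.1 p hp).2)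
  refine ⟨fun p hp => ⟨?_, gcd_eq_one p hp⟩, ?_, hQ.crossBounded.matApply_image hA⟩
  · rintro rfl
    simpa using gcd_eq_one _ hp
  · rintro _ ⟨p, hp, rfl⟩ ⟨q, hq, hqp⟩
    rw [← matApply_neg] at hqp
    obtain rfl := matApply_injective (det_ne_zero_of_abs_det_eq_one hA) hqp
    exact hQ.2.1 p hp hq

theorem CrossBounded.union_neg (hS : CrossBounded k S) : CrossBounded k (S ∪ -S) := by
  rintro p (hp | hp) q (hq | hq)
  · exact hS p hp q hq
  · simpa only [crossDet_neg_right, abs_neg] using hS p hp (-q) hq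
  · simpa only [crossDet_neg_left, abs_neg] using hS (-p) hp q hq
  · simpa only [crossDet_neg_left, crossDet_neg_right, abs_neg] using hS (-p) hp (-q) hq

theorem CrossBounded.finite (hS : CrossBounded k S) {p q : ℤ × ℤ} (hp : p ∈ S) (hq : q ∈ S)
    (hpq : crossDet p q ≠ 0) : S.Finite := by
  refine Set.Finite.of_injOn (f := fun r => (crossDet r q, crossDet p r))
    (t := Set.Icc (-k) k ×ˢ Set.Icc (-k) k) ?_ ?_ ((Set.finite_Icc _ _).prod (Set.finite_Icc _ _))
  · exact fun r hr => ⟨abs_le.1 (hS r hr q hq), abs_le.1 (hS p hp r hr)⟩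
  · intro r _ s _ hrs
    obtain ⟨hrq, hpr⟩ := Prod.mk.inj hrs
    refine smul_right_injective _ hpq ?_
    change crossDet p q • r = crossDet p q • s
    rw [crossDet_smul_eq_add, crossDet_smul_eq_add p q s, hrq, hpr]

/-- `S` lies in the box `[-M, M] × [-h, h]`. -/
def InBox (S : Set (ℤ × ℤ)) (M h : ℕ) : Prop :=
  ∀ p ∈ S, |p.1| ≤ M ∧ |p.2| ≤ h

theorem InBox.union_neg (hS : InBox S M h) : InBox (S ∪ -S) M h := by
  rintro p (hp | hp)
  · exact hS p hp
  · simpa only [Prod.fst_neg, Prod.snd_neg, abs_neg] using hS (-p) hp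

theorem exists_inBox_of_finite (hS : S.Finite) : ∃ M h, InBox S M h := by
  obtain ⟨M, hM⟩ := (hS.image fun p => p.1.natAbs).bddAbove
  obtain ⟨h, hh⟩ := (hS.image fun p => p.2.natAbs).bddAbove
  refine ⟨M, h, fun p hp => ⟨?_, ?_⟩⟩
  · rw [Int.abs_eq_natAbs]
    exact_mod_cast hM (Set.mem_image_of_mem _ hp)
  · rw [Int.abs_eq_natAbs]
    exact_mod_cast hh (Set.mem_image_of_mem _ hp)

/-- Some unimodular image of `S` lies in the box `[-M, M] × [-h, h]`. -/
def FitsBox (S : Set (ℤ × ℤ)) (M h : ℕ) : Prop :=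
  ∃ A : Matrix (Fin 2) (Fin 2) ℤ, |A.det| = 1 ∧ InBox (matApply A '' S) M h

theorem InBox.fitsBox (hS : InBox S M h) : FitsBox S M h :=
  ⟨1, by simp, by simpa only [matApply_one, Set.image_id'] using hS⟩

theorem FitsBox.of_matApply_image (hA : |A.det| = 1) (hS : FitsBox (matApply A '' S) M h) :
    FitsBox S M h := by
  obtain ⟨B, hB, hbox⟩ := hS
  refine ⟨B * A, by rw [Matrix.det_mul, abs_mul, hA, hB, one_mul], ?_⟩
  simpa only [Set.image_image, ← matApply_mul] using hbox

theorem FitsBox.swap (hS : FitsBox S M h) : FitsBox S h M := by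
  obtain ⟨A, hA, hbox⟩ := hS
  refine FitsBox.of_matApply_image hA ⟨!![0, 1; 1, 0], by simp [Matrix.det_fin_two_of], ?_⟩
  rintro _ ⟨p, hp, rfl⟩
  simpa [matApply] using (hbox p hp).symm

/-- `S` lies in the box `[-M, M] × [-h, h]`, and no unimodular image of `S` lies in a box of
smaller `M + h`. This plays the role of a reduced basis in the reduction theory of binary
forms. -/
structure IsMinimalBox (S : Set (ℤ × ℤ)) (M h : ℕ) : Prop where
  inBox : InBox S M h
  add_le : ∀ ⦃M' h'⦄, FitsBox S M' h' → M + h ≤ M' + h'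

theorem FitsBox.exists_isMinimalBox (hS : FitsBox S M h) :
    ∃ A : Matrix (Fin 2) (Fin 2) ℤ, |A.det| = 1 ∧
      ∃ M' h' : ℕ, h' ≤ M' ∧ IsMinimalBox (matApply A '' S) M' h' := by
  obtain ⟨⟨m, n⟩, hmn, hmin⟩ := exists_minimalFor_of_wellFoundedLT
    (fun b : ℕ × ℕ => FitsBox S b.1 b.2) (fun b => b.1 + b.2) ⟨(M, h), hS⟩
  have sum_le ⦃M' h' : ℕ⦄ (hfit : FitsBox S M' h') : m + n ≤ M' + h' :=
    (le_total (m + n) (M' + h')).elim id (hmin (j := (M', h')) hfit)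
  clear hmin
  wlog hle : n ≤ m generalizing m n
  · exact this n m hmn.swap (fun M' h' hfit => (add_comm n m).trans_le (sum_le hfit))
      (le_of_not_ge hle)
  obtain ⟨A, hA, hbox⟩ := hmn
  exact ⟨A, hA, m, n, hle, hbox, fun M' h' hfit => sum_le (hfit.of_matApply_image hA)⟩

theorem IsMinimalBox.exists_le_fst (hS : IsMinimalBox S M h) {m n : ℕ} (hmn : m + n = M + h)
    (hm : 0 < m) (hA : |A.det| = 1) (hsnd : ∀ p ∈ S, |(matApply A p).2| ≤ n) :
    ∃ p ∈ S ∪ -S, m ≤ (matApply A p).1 := by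
  suffices hex : ∃ p ∈ S, m ≤ |(matApply A p).1| by
    obtain ⟨p, hp, hle⟩ := hex
    obtain hle | hle := le_abs.1 hle
    · exact ⟨p, Or.inl hp, hle⟩
    · exact ⟨-p, Or.inr (by simpa using hp), by simpa only [matApply_neg, Prod.fst_neg] using hle⟩
  by_contra! hlt
  have hfit : FitsBox S (m - 1) n := by
    refine ⟨A, hA, ?_⟩
    rintro _ ⟨p, hp, rfl⟩
    have := hlt p hp
    exact ⟨by omega, hsnd p hp⟩
  have := hS.add_le hfit
  omega

theorem IsMinimalBox.exists_snd_eq (hS : IsMinimalBox S M h) (hh : 0 < h) :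
    ∃ a : ℤ, (a, (h : ℤ)) ∈ S ∪ -S := by
  obtain ⟨⟨a, y⟩, hp, hle⟩ := hS.exists_le_fst (A := !![0, 1; 1, 0]) (add_comm h M) hh
    (by simp [Matrix.det_fin_two_of]) fun p hp => by simpa [matApply] using (hS.inBox p hp).1
  obtain rfl : y = h :=
    le_antisymm (abs_le.1 (hS.inBox.union_neg _ hp).2).2 (by simpa [matApply] using hle)
  exact ⟨a, hp⟩

theorem IsMinimalBox.exists_le_fst_add_mul_snd (hS : IsMinimalBox S M h) (hM : 0 < M) (t : ℤ) :
    ∃ p ∈ S ∪ -S, M ≤ p.1 + t * p.2 := by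
  simpa [matApply] using hS.exists_le_fst (A := !![1, t; 0, 1]) rfl hM
    (by simp [Matrix.det_fin_two_of]) fun p hp => by simpa [matApply] using (hS.inBox p hp).2

theorem IsMinimalBox.exists_fst_eq (hS : IsMinimalBox S M h) (hM : 0 < M) :
    ∃ b : ℤ, ((M : ℤ), b) ∈ S ∪ -S := by
  obtain ⟨⟨x, b⟩, hp, hle⟩ := hS.exists_le_fst_add_mul_snd hM 0
  obtain rfl : x = M :=
    le_antisymm (abs_le.1 (hS.inBox.union_neg _ hp).1).2 (by simpa using hle)
  exact ⟨b, hp⟩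

section Inequality

variable {R : Type*} [CommRing R] [LinearOrder R] [IsStrictOrderedRing R]

theorem lt_add_of_sq_lt_four_mul {x y z : R} (hx : 0 ≤ x) (hxyz : z ^ 2 < 4 * (x * y)) :
    z < x + y := by
  have hxy : 0 < x * y := by linarith [sq_nonneg z]
  have hy : 0 < y := pos_of_mul_pos_right hxy hx
  refine lt_of_pow_lt_pow_left₀ 2 (add_nonneg hx hy.le) ?_
  linarith [sq_nonneg (x - y), add_sq x y, sub_sq x y]

theorem three_mul_sq_le_four_mul {a b c e h m k : R} (hhm : h ≤ m) (ha : 0 ≤ a) (hb : 0 ≤ b)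
    (hbh : b ≤ h) (hcm : c ≤ m) (hmce : m ≤ c + e) (hab : m * h - a * b ≤ k)
    (hae : c * h + a * e ≤ k) (hbe : c * b + m * e ≤ k) : 3 * h ^ 2 ≤ 4 * k := by
  by_contra! hlt
  have hh : 0 ≤ h := hb.trans hbh
  have he : 0 ≤ e := by linarith
  have hhmh : h * h ≤ m * h := mul_le_mul_of_nonneg_right hhm hh
  have hch : (m - e) * h ≤ c * h := mul_le_mul_of_nonneg_right (by linarith) hh
  have hcb : (m - e) * b ≤ c * b := mul_le_mul_of_nonneg_right (by linarith) hb
  have hhmbe : h * (b + e) ≤ m * (b + e) := mul_le_mul_of_nonneg_right hhm (add_nonneg hb he)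
  have sq_lt_ab : h ^ 2 < 4 * (a * b) := by linarith
  have sq_lt_ea : h ^ 2 < 4 * (e * (h - a)) := by linarith
  have sq_lt_be : h ^ 2 < 4 * ((h - b) * (h - e)) := by linarith
  have h_lt_add : h < a + b := lt_add_of_sq_lt_four_mul ha sq_lt_ab
  have a_lt_e : a < e := by linarith [lt_add_of_sq_lt_four_mul he sq_lt_ea]
  have add_lt_h : b + e < h := by
    linarith [lt_add_of_sq_lt_four_mul (sub_nonneg.2 hbh) sq_lt_be]
  linarith

end Inequality

theorem IsMinimalBox.three_mul_sq_le (hS : IsMinimalBox S M h) (hhM : h ≤ M)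
    (hne : S.Nonempty) (hk : CrossBounded k S) : 3 * (h : ℤ) ^ 2 ≤ 4 * k := by
  obtain rfl | hh := h.eq_zero_or_pos
  · simpa using hk.nonneg hne
  have hM : 0 < M := hh.trans_le hhM
  have hhM' : (h : ℤ) ≤ M := by exact_mod_cast hhM
  have cross_le {p q : ℤ × ℤ} (hp : p ∈ S ∪ -S) (hq : q ∈ S ∪ -S) : crossDet p q ≤ k :=
    le_of_abs_le (hk.union_neg p hp q hq)
  obtain ⟨a, ha⟩ := hS.exists_snd_eq hh
  obtain ⟨b, hb⟩ := hS.exists_fst_eq hM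
  have hbh : |b| ≤ h := (hS.inBox.union_neg _ hb).2
  have hab : M * h - a * b ≤ k := cross_le hb ha
  obtain hneg | hpos := le_or_gt (a * b) 0
  · linarith [mul_le_mul_of_nonneg_right hhM' h.cast_nonneg, mul_self_nonneg (h : ℤ)]
  -- The reflection `y ↦ -y` exchanges the two cases, and with them the two shears.
  obtain ⟨ha₀, hb₀⟩ | ⟨ha₀, hb₀⟩ := mul_pos_iff.1 hpos
  · obtain ⟨⟨c, d⟩, hc, hcd⟩ := hS.exists_le_fst_add_mul_snd hM (-1)
    have hcM : c ≤ M := le_of_abs_le (hS.inBox.union_neg _ hc).1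
    have hca : c * h - a * d ≤ k := cross_le hc ha
    have hcb : c * b - M * d ≤ k := cross_le hc hb
    exact three_mul_sq_le_four_mul (e := -d) hhM' ha₀.le hb₀.le (le_of_abs_le hbh) hcM
      (by linarith) hab (by linarith) (by linarith)
  · obtain ⟨⟨c, d⟩, hc, hcd⟩ := hS.exists_le_fst_add_mul_snd hM 1
    have hcM : c ≤ M := le_of_abs_le (hS.inBox.union_neg _ hc).1
    have hca : c * h - a * d ≤ k := cross_le hc ha
    have hcb : M * d - c * b ≤ k := cross_le hb hc
    exact three_mul_sq_le_four_mul (a := -a) (b := -b) (e := d) hhM' (by linarith)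
      (by linarith) (neg_le.1 (neg_le_of_abs_le hbh)) hcM (by linarith) (by linarith)
      (by linarith) (by linarith)

theorem exists_det_eq_one_forall_snd_eq_zero (hS : ∀ p ∈ S, ∀ q ∈ S, crossDet p q = 0) :
    ∃ A : Matrix (Fin 2) (Fin 2) ℤ, A.det = 1 ∧ ∀ p ∈ S, (matApply A p).2 = 0 := by
  by_cases hzero : ∀ p ∈ S, p = 0
  · exact ⟨1, Matrix.det_one, fun p hp => by rw [hzero p hp, matApply_one, Prod.snd_zero]⟩
  push Not at hzero
  obtain ⟨⟨x, y⟩, hp, hp₀⟩ := hzero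
  have hg : 0 < Int.gcd x y := by
    refine Int.gcd_pos_iff.2 ?_
    contrapose! hp₀
    exact Prod.ext hp₀.1 hp₀.2
  obtain ⟨x', y', hcop, hx, hy⟩ := Int.exists_gcd_one hg
  obtain ⟨s, t, hst⟩ := Int.isCoprime_iff_gcd_eq_one.2 hcop
  refine ⟨!![s, t; -y', x'], by rw [Matrix.det_fin_two_of]; linarith, fun q hq => ?_⟩
  have hcross : Int.gcd x y * (-y' * q.1 + x' * q.2) = 0 := by
    have : x * q.2 - q.1 * y = 0 := hS _ hp q hq
    linear_combination this - q.2 * hx + q.1 * hy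
  simpa [matApply, hg.ne'] using hcross

theorem CrossBounded.exists_three_mul_sq_le_four_mul (hS : CrossBounded k S) :
    ∃ A : Matrix (Fin 2) (Fin 2) ℤ, |A.det| = 1 ∧
      ∀ p ∈ matApply A '' S, 3 * p.2 ^ 2 ≤ 4 * k := by
  by_cases hzero : ∀ p ∈ S, ∀ q ∈ S, crossDet p q = 0
  · obtain ⟨A, hA, hsnd⟩ := exists_det_eq_one_forall_snd_eq_zero hzero
    refine ⟨A, by rw [hA, abs_one], ?_⟩
    rintro _ ⟨p, hp, rfl⟩
    simpa [hsnd p hp] using hS.nonneg ⟨p, hp⟩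
  · push Not at hzero
    obtain ⟨p, hp, q, hq, hpq⟩ := hzero
    obtain ⟨M₀, h₀, hbox⟩ := exists_inBox_of_finite (hS.finite hp hq hpq)
    obtain ⟨A, hA, M, h, hhM, hmin⟩ := hbox.fitsBox.exists_isMinimalBox
    have hh := hmin.three_mul_sq_le hhM ⟨_, p, hp, rfl⟩ (hS.matApply_image hA)
    refine ⟨A, hA, fun r hr => ?_⟩
    have : r.2 ^ 2 ≤ (h : ℤ) ^ 2 := sq_le_sq.2 (by simpa using (hmin.inBox r hr).2)
    linarith

theorem exists_equiv_height_le_sqrt_four_k_div_three_general (k : ℕ)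
    (Q : Set (ℤ × ℤ)) (hQ : IsKNice k Q) :
    ∃ Q' : Set (ℤ × ℤ), EquivSets Q Q' ∧ IsKNice k Q' ∧
      ∀ p ∈ Q', ((|p.2| : ℤ) : ℝ) ≤ Real.sqrt (4 * k / 3) := by
  obtain ⟨A, hA, hheight⟩ := hQ.crossBounded.exists_three_mul_sq_le_four_mul
  refine ⟨matApply A '' Q, ⟨A, hA, id, fun _ => Or.inl rfl, (Set.image_id _).symm⟩,
    hQ.matApply_image hA, fun p hp => Real.le_sqrt_of_sq_le ?_⟩
  have hsq : 3 * (p.2 : ℝ) ^ 2 ≤ 4 * k := by exact_mod_cast hheight p hp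
  rw [Int.cast_abs, sq_abs]
  linarith

theorem exists_equiv_height_le_sqrt_four_k_div_three (k : ℕ) (hk2 : 2 ≤ k)
    (hk : k ≤ 3224) (Q : Set (ℤ × ℤ)) (hQ : IsKNice k Q) :
    ∃ Q' : Set (ℤ × ℤ), EquivSets Q Q' ∧ IsKNice k Q' ∧
      ∀ p ∈ Q', ((|p.2| : ℤ) : ℝ) ≤ Real.sqrt (4 * k / 3) :=
  exists_equiv_height_le_sqrt_four_k_div_three_general k Q hQ
end
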